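/- arXiv:math/0103011 — 2 statements merged into one kernel-verified Lean document; each statement's English description precedes it below -/
import Mathlib

section
/- For every n ≥ 0 and every face a of I^{n+1} lying in the image of φ_n^-, one has (∂^+R(a))^⊥ = ∂^+R(a^⊥), where the left-hand operator ∂^+ is computed in the cube I^{n+1} and the right-hand operator ∂^+ is computed in the simplex Δ^n. -/
/-- Positions of the letter `0` in a face (word over `{−,0,+}`) of the cube. -/
def zeros {N : ℕ} (a : Fin N → SignType) : Finset (Fin N) :=
  Finset.univ.filter fun i => a i = SignType.zero

/-- `b` is a subface of the cube face `a` iff at each position `b i = a i` or `a i = 0`. -/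
def subfaceC {N : ℕ} (b a : Fin N → SignType) : Prop :=
  ∀ i, b i = a i ∨ a i = SignType.zero

/-- `R(a)`: the set of all subfaces of a cube face `a`. -/
def RC {N : ℕ} (a : Fin N → SignType) : Set (Fin N → SignType) :=
  { b | subfaceC b a }

/-- `s_a` for a cube face `a`: replace the `j`-th zero (1-based) by `−` if `j` is odd
and by `+` if `j` is even. -/
def cubeS {N : ℕ} (a : Fin N → SignType) : Set (Fin N → SignType) :=
  { b | ∃ k : Fin (zeros a).card,
      b = Function.update a ((zeros a).orderEmbOfFin rfl k)
            (if k.val % 2 = 0 then SignType.neg else SignType.pos) }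

/-- `t_a` for a cube face `a`: replace the `j`-th zero (1-based) by `+` if `j` is odd
and by `−` if `j` is even. -/
def cubeT {N : ℕ} (a : Fin N → SignType) : Set (Fin N → SignType) :=
  { b | ∃ k : Fin (zeros a).card,
      b = Function.update a ((zeros a).orderEmbOfFin rfl k)
            (if k.val % 2 = 0 then SignType.pos else SignType.neg) }

/-- `∂^-R(a) = ⋃_{b ∈ s_a} R(b)` in the cube (`= ∅` when `dim a = 0` since `s_a = ∅`). -/
def bdryCneg {N : ℕ} (a : Fin N → SignType) : Set (Fin N → SignType) :=
  ⋃ b ∈ cubeS a, RC b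

/-- `∂^+R(a) = ⋃_{b ∈ t_a} R(b)` in the cube (`= ∅` when `dim a = 0` since `t_a = ∅`). -/
def bdryCpos {N : ℕ} (a : Fin N → SignType) : Set (Fin N → SignType) :=
  ⋃ b ∈ cubeT a, RC b

/-- `R(σ)`: the set of all subfaces (nonempty subsets) of a simplex face `σ`. -/
def RS {m : ℕ} (σ : Finset (Fin m)) : Set (Finset (Fin m)) :=
  { τ | τ.Nonempty ∧ τ ⊆ σ }

/-- `s_σ` for a simplex face `σ = {σ_0 < … < σ_r}`: the faces `σ \ {σ_{2k}}`. -/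
def simpS {m : ℕ} (σ : Finset (Fin m)) : Set (Finset (Fin m)) :=
  { τ | ∃ k : Fin σ.card, k.val % 2 = 0 ∧ τ = σ.erase (σ.orderEmbOfFin rfl k) }

/-- `t_σ` for a simplex face `σ = {σ_0 < … < σ_r}`: the faces `σ \ {σ_{2k+1}}`. -/
def simpT {m : ℕ} (σ : Finset (Fin m)) : Set (Finset (Fin m)) :=
  { τ | ∃ k : Fin σ.card, k.val % 2 = 1 ∧ τ = σ.erase (σ.orderEmbOfFin rfl k) }

/-- `∂^-R(σ) = ⋃_{τ ∈ s_σ} R(τ)` in the simplex (`= ∅` when `dim σ = 0`, since the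
removal of the unique vertex gives the empty set, which has no nonempty subsets). -/
def bdrySneg {m : ℕ} (σ : Finset (Fin m)) : Set (Finset (Fin m)) :=
  ⋃ τ ∈ simpS σ, RS τ

/-- `∂^+R(σ) = ⋃_{τ ∈ t_σ} R(τ)` in the simplex. -/
def bdrySpos {m : ℕ} (σ : Finset (Fin m)) : Set (Finset (Fin m)) :=
  ⋃ τ ∈ simpT σ, RS τ

/-- `phi σ` is the map `φ_n^-` sending a face `σ` of `Δ^n` to the face of `I^{n+1}`
whose letter at position `i` is `0` when `i ∈ σ` and `−` otherwise. -/
def phi {m : ℕ} (σ : Finset (Fin m)) : Fin m → SignType :=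
  fun i => if i ∈ σ then SignType.zero else SignType.neg

/-- `y^⊥ = {i : y i = 0}`, the unique `φ`-preimage of a cube face `y ∈ Im φ`. -/
def perpF {N : ℕ} (y : Fin N → SignType) : Finset (Fin N) :=
  Finset.univ.filter fun i => y i = SignType.zero

/-- `X^⊥ = { y^⊥ : y ∈ X ∩ Im φ }` for a set `X` of cube faces. -/
def perpSet {N : ℕ} (X : Set (Fin N → SignType)) : Set (Finset (Fin N)) :=
  { τ | ∃ y ∈ X, (∃ σ : Finset (Fin N), σ.Nonempty ∧ phi σ = y) ∧ τ = perpF y }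

/-!
Under `φ⁻`, changing a zero of a cube face to `−` erases the corresponding vertex of the simplex
face, whereas a cube face containing the letter `+` has no subface in the image of `φ⁻`. In `t_a`
the odd-numbered zeros become `+`, so only the even-numbered ones contribute to `(∂⁺R(a))^⊥`.
Vertices of a simplex are numbered from `0`, so the vertices to erase are those of odd index,
as in `t_σ`.
-/

section

variable {m : ℕ} {σ τ : Finset (Fin m)}

theorem zeros_phi (σ : Finset (Fin m)) : zeros (phi σ) = σ := by
  ext i
  by_cases hi : i ∈ σ <;> simp [zeros, phi, hi]

theorem perpF_phi (σ : Finset (Fin m)) : perpF (phi σ) = σ :=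
  zeros_phi σ

theorem update_phi_neg (σ : Finset (Fin m)) (i : Fin m) :
    Function.update (phi σ) i SignType.neg = phi (σ.erase i) := by
  ext j
  by_cases hj : j = i <;> simp [phi, hj]

theorem phi_mem_RC_phi_iff_subset : phi τ ∈ RC (phi σ) ↔ τ ⊆ σ := by
  refine forall_congr' fun i => ?_
  by_cases hσ : i ∈ σ <;> by_cases hτ : i ∈ τ <;> simp [phi, hσ, hτ]

theorem phi_notMem_RC_of_eq_pos {b : Fin m → SignType} {i : Fin m} (hb : b i = SignType.pos) :
    phi τ ∉ RC b := by
  intro h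
  have hi := h i
  by_cases hτ : i ∈ τ <;> simp [phi, hb, hτ] at hi

theorem mem_cubeT_iff_of_zeros_eq {a b : Fin m → SignType} (ha : zeros a = σ) :
    b ∈ cubeT a ↔ ∃ k : Fin σ.card,
      b = Function.update a (σ.orderEmbOfFin rfl k)
        (if k.val % 2 = 0 then SignType.pos else SignType.neg) := by
  subst ha
  rfl

theorem phi_mem_cubeT_phi_of_mem_simpT (hτ : τ ∈ simpT σ) : phi τ ∈ cubeT (phi σ) := by
  obtain ⟨k, hk, rfl⟩ := hτ
  exact (mem_cubeT_iff_of_zeros_eq (zeros_phi σ)).2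
    ⟨k, by rw [if_neg (by lia), update_phi_neg]⟩

theorem eq_pos_or_eq_phi_of_mem_cubeT_phi {b : Fin m → SignType} (hb : b ∈ cubeT (phi σ)) :
    (∃ i, b i = SignType.pos) ∨ ∃ ρ ∈ simpT σ, b = phi ρ := by
  obtain ⟨k, rfl⟩ := (mem_cubeT_iff_of_zeros_eq (zeros_phi σ)).1 hb
  rcases Nat.mod_two_eq_zero_or_one k with hk | hk
  · exact .inl ⟨σ.orderEmbOfFin rfl k, by rw [Function.update_self, if_pos hk]⟩
  · exact .inr ⟨_, ⟨k, hk, rfl⟩, by rw [if_neg (by lia), update_phi_neg]⟩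

theorem phi_mem_bdryCpos_phi_iff : phi τ ∈ bdryCpos (phi σ) ↔ ∃ ρ ∈ simpT σ, τ ⊆ ρ := by
  simp only [bdryCpos, Set.mem_iUnion, exists_prop]
  constructor
  · rintro ⟨b, hb, hτ⟩
    rcases eq_pos_or_eq_phi_of_mem_cubeT_phi hb with ⟨i, hi⟩ | ⟨ρ, hρ, rfl⟩
    · exact absurd hτ (phi_notMem_RC_of_eq_pos hi)
    · exact ⟨ρ, hρ, phi_mem_RC_phi_iff_subset.1 hτ⟩
  · rintro ⟨ρ, hρ, hτ⟩
    exact ⟨phi ρ, phi_mem_cubeT_phi_of_mem_simpT hρ, phi_mem_RC_phi_iff_subset.2 hτ⟩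

theorem mem_bdrySpos_iff : τ ∈ bdrySpos σ ↔ τ.Nonempty ∧ ∃ ρ ∈ simpT σ, τ ⊆ ρ := by
  simp only [bdrySpos, RS, Set.mem_iUnion, Set.mem_ofPred_eq, exists_prop]
  tauto

theorem mem_perpSet_iff {X : Set (Fin m → SignType)} :
    τ ∈ perpSet X ↔ τ.Nonempty ∧ phi τ ∈ X := by
  constructor
  · rintro ⟨_, hX, ⟨ρ, hρ, rfl⟩, rfl⟩
    rw [perpF_phi]
    exact ⟨hρ, hX⟩
  · rintro ⟨hτ, hX⟩
    exact ⟨phi τ, hX, ⟨τ, hτ, rfl⟩, (perpF_phi τ).symm⟩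

end

/-- For every face `a` of `I^{n+1}` in the image of `φ_n^-`,
`(∂^+R(a))^⊥ = ∂^+R(a^⊥)`. -/
theorem stmt4 (n : ℕ) (a : Fin (n + 1) → SignType)
    (ha : ∃ σ : Finset (Fin (n + 1)), σ.Nonempty ∧ phi σ = a) :
    perpSet (bdryCpos a) = bdrySpos (perpF a) := by
  obtain ⟨σ, _, rfl⟩ := ha
  ext τ
  rw [mem_perpSet_iff, phi_mem_bdryCpos_phi_iff, perpF_phi, mem_bdrySpos_iff]
end

section
/- Order the three-letter alphabet T = {−,0,+} by − < 0 < +. For each n ≥ 0 let F([n]) be the set of functions from {0,1,…,n} to T, and for a monotone map f : {0,…,m} → {0,…,n} let F(f) : F([m]) → F([n]) send w to the function j ↦ sup{w(k) : f(k) = j}, where the supremum of the empty set is −. Then F is a functor from the simplex category (finite nonempty linear orders [n] with monotone maps) to the category of sets; moreover F(ε_i) is the map inserting the letter − at the i-th coordinate (so that coordinate i of F(ε_i)(w) is − and the other coordinates are those of w in order), and F(η_i) is the map merging coordinates i and i+1 by taking their maximum. (This is the combinatorial, face-level content of the statement that [n] ↦ P^-_{R(−⋯−)}(I^{n+1}) with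 the maps induced by δ^-_{i+1} and γ^-_{i+1} defines a functor from the simplex category isomorphic to the cosimplicial ω-category Δ^*.) -/
/-- `F` on objects: `F([n])` is the set of functions from `{0,…,n}` to the ordered
three-letter alphabet `T = {− < 0 < +}` (realized as `SignType`); on morphisms,
`Fmap f` sends `w` to `j ↦ sup { w k : f k = j }`, where the supremum of the empty set
is `−` (`⊥` in `SignType` is `−`). -/
def Fmap {m n : ℕ} (f : Fin m → Fin n) (w : Fin m → SignType) : Fin n → SignType :=
  fun j => (Finset.univ.filter fun k => f k = j).sup w

/-!
Taking suprema over the fibers of `f` is left adjoint to precomposition with `f`. Precomposition is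
contravariantly functorial and left adjoints are unique, so `F` is a functor. A left adjoint of
precomposition with `ε_i`, that is, of deleting coordinate `i`, inserts the least element at `i`. As
`ε_i` and `ε_{i+1}` are sections of `η_i` which together hit every point, `F(η_i) w` is
`w ∘ ε_i ⊔ w ∘ ε_{i+1}`.
-/

section FiberSup

variable {ι κ μ α : Type*} [Fintype ι] [DecidableEq κ] [SemilatticeSup α] [OrderBot α]

/-- The pushforward of a family `w` along `f`: its value at `j` is the supremum of `w` over the
fiber of `f` at `j`, which is `⊥` where the fiber is empty. This is `Fmap` for arbitrary finite
index types and an arbitrary join-semilattice of letters with a least element. -/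
def fiberSup (f : ι → κ) (w : ι → α) : κ → α :=
  fun j => (Finset.univ.filter fun k => f k = j).sup w

theorem fiberSup_le_iff {f : ι → κ} {w : ι → α} {v : κ → α} :
    fiberSup f w ≤ v ↔ w ≤ v ∘ f := by
  simpa [fiberSup, Pi.le_def] using forall_comm.trans (forall_congr' fun _ => forall_eq')

theorem fiberSup_id [DecidableEq ι] (w : ι → α) : fiberSup id w = w :=
  eq_of_forall_ge_iff fun _ => fiberSup_le_iff

theorem fiberSup_comp [Fintype κ] [DecidableEq μ] (f : ι → κ) (g : κ → μ) (w : ι → α) :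
    fiberSup (g ∘ f) w = fiberSup g (fiberSup f w) :=
  eq_of_forall_ge_iff fun v => by simp only [fiberSup_le_iff, Function.comp_assoc]

theorem fiberSup_eq_sup_of_rightInverse {f : ι → κ} {s t : κ → ι}
    (hs : Function.RightInverse s f) (ht : Function.RightInverse t f)
    (hst : ∀ k, s (f k) = k ∨ t (f k) = k) (w : ι → α) :
    fiberSup f w = w ∘ s ⊔ w ∘ t := by
  refine eq_of_forall_ge_iff fun v => ?_
  rw [fiberSup_le_iff, sup_le_iff]
  constructor
  · intro h
    exact ⟨fun j => by simpa [hs j] using h (s j), fun j => by simpa [ht j] using h (t j)⟩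
  · rintro ⟨h_s, h_t⟩ k
    rcases hst k with hk | hk
    · simpa [hk] using h_s (f k)
    · simpa [hk] using h_t (f k)

end FiberSup

section Fin

variable {α : Type*} [SemilatticeSup α] {n : ℕ}

theorem castSucc_succAbove_predAbove_or_succ_succAbove_predAbove (i : Fin n) (k : Fin (n + 1)) :
    i.castSucc.succAbove (i.predAbove k) = k ∨ i.succ.succAbove (i.predAbove k) = k := by
  by_cases hk : k = i.castSucc
  · exact .inr (Fin.succ_succAbove_predAbove (hk ▸ Fin.castSucc_lt_succ.ne))
  · exact .inl (Fin.succAbove_predAbove hk)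

theorem predAbove_succ_succAbove (i l : Fin n) : i.predAbove (i.succ.succAbove l) = l := by
  rcases le_or_gt l i with h | h
  · rw [Fin.succAbove_succ_of_le _ _ h, Fin.predAbove_castSucc_of_le _ _ h]
  · rw [Fin.succAbove_succ_of_lt _ _ h, Fin.predAbove_succ_of_le _ _ h.le]

theorem comp_castSucc_succAbove_sup_comp_succ_succAbove (i : Fin n) (w : Fin (n + 1) → α) :
    w ∘ i.castSucc.succAbove ⊔ w ∘ i.succ.succAbove = fun l =>
      if l.val < i.val then w l.castSucc
      else if l = i then w l.castSucc ⊔ w l.succ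
      else w l.succ := by
  funext l
  rcases lt_trichotomy l i with h | rfl | h
  · simp [h, Fin.succAbove_castSucc_of_lt, Fin.succAbove_succ_of_le, h.le]
  · simp [sup_comm]
  · simp [h.not_gt, h.ne', Fin.succAbove_castSucc_of_le, Fin.succAbove_succ_of_lt, h, h.le]

variable [OrderBot α]

theorem fiberSup_succAbove (i : Fin (n + 1)) (w : Fin n → α) :
    fiberSup i.succAbove w = i.insertNth ⊥ w := by
  refine eq_of_forall_ge_iff fun v => ?_
  rw [fiberSup_le_iff, Fin.insertNth_le_iff]
  exact (and_iff_right bot_le).symm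

theorem fiberSup_predAbove (i : Fin n) (w : Fin (n + 1) → α) :
    fiberSup i.predAbove w = w ∘ i.castSucc.succAbove ⊔ w ∘ i.succ.succAbove :=
  fiberSup_eq_sup_of_rightInverse i.predAbove_succAbove (predAbove_succ_succAbove i)
    (castSucc_succAbove_predAbove_or_succ_succAbove_predAbove i) w

end Fin

theorem stmt8_general (α : Type*) [SemilatticeSup α] [OrderBot α] :
    (∀ (ι : Type*) [Fintype ι] [DecidableEq ι] (w : ι → α), fiberSup id w = w) ∧
    (∀ (ι κ μ : Type*) [Fintype ι] [Fintype κ] [DecidableEq κ] [DecidableEq μ]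
        (f : ι → κ) (g : κ → μ) (w : ι → α),
        fiberSup (g ∘ f) w = fiberSup g (fiberSup f w)) ∧
    (∀ (n : ℕ) (i : Fin (n + 1)) (w : Fin n → α),
        fiberSup i.succAbove w = i.insertNth ⊥ w) ∧
    (∀ (n : ℕ) (i : Fin n) (w : Fin (n + 1) → α),
        fiberSup i.predAbove w = fun l =>
          if l.val < i.val then w l.castSucc
          else if l = i then w l.castSucc ⊔ w l.succ
          else w l.succ) :=
  ⟨fun _ _ _ => fiberSup_id, fun _ _ _ _ _ _ _ => fiberSup_comp,
    fun _ => fiberSup_succAbove, fun _ i w =>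
      (fiberSup_predAbove i w).trans (comp_castSucc_succAbove_sup_comp_succ_succAbove i w)⟩

/-- `F` is a functor from the simplex category (finite nonempty linear orders with
monotone maps) to sets: it preserves identities and composition of monotone maps;
moreover `F(ε_i)` is the map inserting the letter `−` at the `i`-th coordinate
(`ε_i = Fin.succAbove i`, insertion via `Fin.insertNth`), and `F(η_i)` is the map
merging coordinates `i` and `i+1` by taking their maximum
(`η_i = Fin.predAbove i`). -/
theorem stmt8 :
    (∀ (m : ℕ) (w : Fin m → SignType), Fmap (id : Fin m → Fin m) w = w) ∧
    (∀ (m n p : ℕ) (f : Fin m → Fin n) (g : Fin n → Fin p),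
        Monotone f → Monotone g → ∀ w : Fin m → SignType,
        Fmap (g ∘ f) w = Fmap g (Fmap f w)) ∧
    ((⊥ : SignType) = SignType.neg) ∧
    (∀ (n : ℕ) (i : Fin (n + 1)) (w : Fin n → SignType),
        Fmap (Fin.succAbove i) w =
          (Fin.insertNth i SignType.neg w : Fin (n + 1) → SignType)) ∧
    (∀ (n : ℕ) (i : Fin (n + 1)) (w : Fin (n + 2) → SignType),
        Fmap (Fin.predAbove i) w = fun ℓ : Fin (n + 1) =>
          if ℓ.val < i.val then w ℓ.castSucc
          else if ℓ = i then max (w ℓ.castSucc) (w ℓ.succ)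
          else w ℓ.succ) := by
  obtain ⟨map_id, map_comp, map_face, map_degen⟩ := stmt8_general SignType
  exact ⟨fun m => map_id (Fin m), fun m n p f g _ _ => map_comp (Fin m) (Fin n) (Fin p) f g, rfl,
    map_face, fun n => map_degen (n + 1)⟩
end
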